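/- Let F : (0,1] → [0,∞) be measurable and let C ≥ 0 be such that F(t) ≤ C · ∫_{t/2}^t F(s) ds/s for every t ∈ (0,1]. Then for every α ∈ ℝ and all exponents 1 ≤ q₁ ≤ q₂ ≤ ∞ there exists a constant C' depending only on C, α and q₁ such that ‖ t ↦ t^{−α/2} F(t) ‖_{L^{q₂}((0,1], dt/t)} ≤ C' · ‖ t ↦ t^{−α/2} F(t) ‖_{L^{q₁}((0,1], dt/t)}. -/

import Mathlib

/-!
For `q₁ = ∞` there is nothing to prove, so let `q₁ < ∞`. Write
`G(t) = t^{-α/2} F(t)`, `μ = dt/t` and `N = ‖G‖_{L^{q₁}(μ)}`. On the dyadic window `(t/2, t]`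
the weights `s^{-α/2}` and `t^{-α/2}` agree up to the factor `2^{|α|/2}`, so the local-averaging
hypothesis passes from `F` to `G` (`weighted_local_average`). Since `μ (t/2, t] ≤ 1`, Hölder's
inequality bounds the average by `N`, which yields the pointwise estimate `G ≤ C 2^{|α|/2} N` on
`(0,1]`; this is the case `q₂ = ∞`. For finite `q₂`, interpolate:
`∫ G^{q₂} dμ ≤ (sup G)^{q₂ - q₁} ∫ G^{q₁} dμ` (`lqNorm_le_of_ae_le`).
-/


open MeasureTheory
open scoped ENNReal NNReal

/-- The measure `dt/t` on the interval `(0,1] ⊆ ℝ`. -/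
noncomputable def haarIoc : Measure ℝ :=
  (volume.restrict (Set.Ioc (0 : ℝ) 1)).withDensity fun t => ENNReal.ofReal t⁻¹

/-- The `L^q` norm on `(0,1]` with respect to the measure `dt/t`, for `q ∈ [1,∞]`:
the essential supremum if `q = ∞`, and `(∫₀¹ g(t)^q dt/t)^{1/q}` otherwise. -/
noncomputable def lqNorm (q : ℝ≥0∞) (g : ℝ → ℝ≥0∞) : ℝ≥0∞ :=
  if q = ⊤ then essSup g haarIoc
  else (∫⁻ t, g t ^ q.toReal ∂haarIoc) ^ (1 / q.toReal)

/-- A dyadic window has `dt/t`-measure at most one; for `t ≤ 1` the exact value is `log 2`. -/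
lemma haarIoc_window_le_one {t : ℝ} (ht : 0 < t) : haarIoc (Set.Ioc (t / 2) t) ≤ 1 := by
  rw [haarIoc, withDensity_apply _ measurableSet_Ioc]
  calc ∫⁻ s in Set.Ioc (t / 2) t, ENNReal.ofReal s⁻¹ ∂(volume.restrict (Set.Ioc (0 : ℝ) 1))
      ≤ ∫⁻ s in Set.Ioc (t / 2) t, ENNReal.ofReal s⁻¹ :=
        lintegral_mono' (Measure.restrict_mono le_rfl Measure.restrict_le_self) le_rfl
    _ ≤ ∫⁻ _ in Set.Ioc (t / 2) t, ENNReal.ofReal (t / 2)⁻¹ := by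
        refine setLIntegral_mono measurable_const fun s hs => ENNReal.ofReal_le_ofReal ?_
        exact inv_anti₀ (by positivity) hs.1.le
    _ = 1 := by
        rw [setLIntegral_const, Real.volume_Ioc, ← ENNReal.ofReal_mul (by positivity)]
        rw [show (t / 2)⁻¹ * (t - t / 2) = 1 by field_simp; ring, ENNReal.ofReal_one]

lemma setLIntegral_haarIoc {t : ℝ} (ht : t ∈ Set.Ioc (0 : ℝ) 1) {g : ℝ → ℝ≥0∞}
    (hg : Measurable g) :
    ∫⁻ s in Set.Ioc (t / 2) t, g s ∂haarIoc
      = ∫⁻ s in Set.Ioc (t / 2) t, g s * ENNReal.ofReal s⁻¹ := by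
  have hsub : Set.Ioc (t / 2) t ⊆ Set.Ioc (0 : ℝ) 1 := fun s hs =>
    ⟨by linarith [hs.1, ht.1], hs.2.trans ht.2⟩
  rw [haarIoc, restrict_withDensity measurableSet_Ioc,
    Measure.restrict_restrict_of_subset hsub,
    lintegral_withDensity_eq_lintegral_mul _ (by fun_prop) hg]
  simp only [Pi.mul_apply, mul_comm]

/-- On a dyadic window the power weight varies by at most the factor `2^{|α|/2}`. -/
lemma weight_le {α s t : ℝ} (ht : 0 < t) (hs : s ∈ Set.Ioc (t / 2) t) :
    t ^ (-α / 2) ≤ (2 : ℝ) ^ (|α| / 2) * s ^ (-α / 2) := by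
  have hs0 : 0 < s := by linarith [hs.1]
  have h1 : 1 ≤ t / s := (one_le_div hs0).2 hs.2
  have h2 : t / s ≤ 2 := (div_le_iff₀ hs0).2 (by linarith [hs.1])
  have h3 : (t / s) ^ (-α / 2) ≤ (2 : ℝ) ^ (|α| / 2) :=
    (Real.rpow_le_rpow_of_exponent_le h1 (by linarith [neg_le_abs α])).trans
      (Real.rpow_le_rpow (by positivity) h2 (by positivity))
  rwa [Real.div_rpow ht.le hs0.le, div_le_iff₀ (Real.rpow_pos_of_pos hs0 _)] at h3

/-- The local-averaging inequality for `F` passes to `t^{-α/2} F(t)`, at the price of the factor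
`2^{|α|/2}`. -/
lemma weighted_local_average {C α : ℝ} (hC : 0 ≤ C) {F : ℝ → ℝ} (hF : Measurable F)
    {t : ℝ} (ht : t ∈ Set.Ioc (0 : ℝ) 1)
    (h : ENNReal.ofReal (F t) ≤ ENNReal.ofReal C *
      ∫⁻ s in Set.Ioc (t / 2) t, ENNReal.ofReal (F s) * ENNReal.ofReal s⁻¹) :
    ENNReal.ofReal (t ^ (-α / 2) * F t) ≤ ENNReal.ofReal (C * (2 : ℝ) ^ (|α| / 2)) *
      ∫⁻ s in Set.Ioc (t / 2) t, ENNReal.ofReal (s ^ (-α / 2) * F s) ∂haarIoc := by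
  have ht0 : 0 ≤ t ^ (-α / 2) := Real.rpow_nonneg ht.1.le _
  have hK : (0 : ℝ) ≤ (2 : ℝ) ^ (|α| / 2) := by positivity
  rw [setLIntegral_haarIoc ht (by fun_prop), ENNReal.ofReal_mul ht0, ENNReal.ofReal_mul hC]
  calc ENNReal.ofReal (t ^ (-α / 2)) * ENNReal.ofReal (F t)
      ≤ ENNReal.ofReal (t ^ (-α / 2)) * (ENNReal.ofReal C *
          ∫⁻ s in Set.Ioc (t / 2) t, ENNReal.ofReal (F s) * ENNReal.ofReal s⁻¹) := by gcongr
    _ = ENNReal.ofReal C * ∫⁻ s in Set.Ioc (t / 2) t,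
          ENNReal.ofReal (t ^ (-α / 2)) * (ENNReal.ofReal (F s) * ENNReal.ofReal s⁻¹) := by
        rw [lintegral_const_mul _ (by fun_prop), mul_left_comm]
    _ ≤ ENNReal.ofReal C * ∫⁻ s in Set.Ioc (t / 2) t, ENNReal.ofReal ((2 : ℝ) ^ (|α| / 2)) *
          (ENNReal.ofReal (s ^ (-α / 2) * F s) * ENNReal.ofReal s⁻¹) := by
        gcongr ENNReal.ofReal C * ?_
        refine setLIntegral_mono (by fun_prop) fun s hs => ?_
        have hs0 : 0 ≤ s := by linarith [hs.1, ht.1]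
        rw [← mul_assoc, ← mul_assoc, ENNReal.ofReal_mul (Real.rpow_nonneg hs0 _), ← mul_assoc,
          ← ENNReal.ofReal_mul hK]
        gcongr
        exact weight_le ht.1 hs
    _ = _ := by rw [lintegral_const_mul _ (by fun_prop), mul_assoc]

/-- Hölder's inequality on a dyadic window. -/
lemma window_average_le_lqNorm {q : ℝ≥0∞} (hq : 1 ≤ q) (hq' : q ≠ ⊤) {g : ℝ → ℝ≥0∞}
    (hg : Measurable g) {t : ℝ} (ht : 0 < t) :
    ∫⁻ s in Set.Ioc (t / 2) t, g s ∂haarIoc ≤ lqNorm q g := by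
  have hq0 : q ≠ 0 := (zero_lt_one.trans_le hq).ne'
  have hr : 1 ≤ q.toReal := by simpa using ENNReal.toReal_mono hq' hq
  have h := eLpNorm_le_eLpNorm_mul_rpow_measure_univ
    (μ := haarIoc.restrict (Set.Ioc (t / 2) t)) hq hg.aestronglyMeasurable
  rw [eLpNorm_one_eq_lintegral_enorm, eLpNorm_eq_lintegral_rpow_enorm_toReal hq0 hq'] at h
  simp only [enorm_eq_self, Measure.restrict_apply_univ] at h
  refine h.trans ?_
  rw [lqNorm, if_neg hq']
  calc _ ≤ (∫⁻ s in Set.Ioc (t / 2) t, g s ^ q.toReal ∂haarIoc) ^ (1 / q.toReal) * 1 := by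
        gcongr
        refine ENNReal.rpow_le_one (haarIoc_window_le_one ht) ?_
        rw [ENNReal.toReal_one, div_one, sub_nonneg]
        exact (div_le_one (by linarith)).2 hr
    _ ≤ _ := by
        rw [mul_one]
        gcongr
        exact Measure.restrict_le_self

/-- Interpolation: a common bound `B` for the `L^{q₁}` norm and the supremum also bounds the
`L^{q₂}` norm. -/
lemma lqNorm_le_of_ae_le {q₁ q₂ : ℝ≥0∞} (hq₁ : 1 ≤ q₁) (hq₁' : q₁ ≠ ⊤) (hq : q₁ ≤ q₂)
    {g : ℝ → ℝ≥0∞} (hg : Measurable g) {B : ℝ≥0∞} (hB : ∀ᵐ t ∂haarIoc, g t ≤ B)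
    (hN : lqNorm q₁ g ≤ B) : lqNorm q₂ g ≤ B := by
  by_cases h2 : q₂ = ⊤
  · rw [lqNorm, if_pos h2]
    exact essSup_le_of_ae_le _ hB
  have hp : 1 ≤ q₁.toReal := by simpa using ENNReal.toReal_mono hq₁' hq₁
  have hpr : q₁.toReal ≤ q₂.toReal := ENNReal.toReal_mono h2 hq
  rw [lqNorm, if_neg hq₁', one_div, ENNReal.rpow_inv_le_iff (by linarith)] at hN
  rw [lqNorm, if_neg h2, one_div, ENNReal.rpow_inv_le_iff (by linarith)]
  have hsplit : ∀ x : ℝ≥0∞, x ^ q₂.toReal = x ^ q₁.toReal * x ^ (q₂.toReal - q₁.toReal) := by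
    intro x
    rw [← ENNReal.rpow_add_of_nonneg _ _ (by linarith) (by linarith), add_sub_cancel]
  calc ∫⁻ t, g t ^ q₂.toReal ∂haarIoc
      ≤ ∫⁻ t, g t ^ q₁.toReal * B ^ (q₂.toReal - q₁.toReal) ∂haarIoc := by
        refine lintegral_mono_ae ?_
        filter_upwards [hB] with t ht
        rw [hsplit]
        gcongr
    _ = (∫⁻ t, g t ^ q₁.toReal ∂haarIoc) * B ^ (q₂.toReal - q₁.toReal) :=
        lintegral_mul_const _ (hg.pow_const _)
    _ ≤ B ^ q₁.toReal * B ^ (q₂.toReal - q₁.toReal) := by gcongr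
    _ = B ^ q₂.toReal := (hsplit B).symm

lemma ae_haarIoc_mem : ∀ᵐ t ∂haarIoc, t ∈ Set.Ioc (0 : ℝ) 1 :=
  (withDensity_absolutelyContinuous _ _).ae_le (ae_restrict_mem measurableSet_Ioc)

/-- If a measurable `F : (0,1] → [0,∞)` satisfies `F(t) ≤ C ∫_{t/2}^t F(s) ds/s` for
all `t ∈ (0,1]`, then for every `α ∈ ℝ` and `1 ≤ q₁ ≤ q₂ ≤ ∞` one has
`‖ t ↦ t^{−α/2} F(t) ‖_{L^{q₂}((0,1], dt/t)} ≤ C' · ‖ t ↦ t^{−α/2} F(t) ‖_{L^{q₁}((0,1], dt/t)}`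
with a constant `C'` depending only on `C`, `α` and `q₁`. -/
theorem stmt8 (C : ℝ) (hC : 0 ≤ C) (α : ℝ) (q₁ : ℝ≥0∞) (hq₁ : 1 ≤ q₁) :
    ∃ C' : ℝ, 0 ≤ C' ∧
      ∀ q₂ : ℝ≥0∞, q₁ ≤ q₂ →
      ∀ F : ℝ → ℝ, Measurable F → (∀ t ∈ Set.Ioc (0 : ℝ) 1, 0 ≤ F t) →
        (∀ t ∈ Set.Ioc (0 : ℝ) 1,
          ENNReal.ofReal (F t) ≤ ENNReal.ofReal C *
            ∫⁻ s in Set.Ioc (t / 2) t, ENNReal.ofReal (F s) * ENNReal.ofReal s⁻¹) →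
        lqNorm q₂ (fun t => ENNReal.ofReal (t ^ (-α / 2) * F t)) ≤
          ENNReal.ofReal C' * lqNorm q₁ (fun t => ENNReal.ofReal (t ^ (-α / 2) * F t)) := by
  by_cases htop : q₁ = ⊤
  · refine ⟨1, zero_le_one, fun q₂ hq F _ _ _ => ?_⟩
    have h2 : q₂ = ⊤ := top_le_iff.1 (htop ▸ hq)
    rw [h2, htop, ENNReal.ofReal_one, one_mul]
  -- The maximum with `1` lets `C' · N` dominate the `L^{q₁}` norm `N` as well as the supremum.
  refine ⟨max 1 (C * (2 : ℝ) ^ (|α| / 2)), by positivity, fun q₂ hq F hF _ h => ?_⟩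
  have hG : Measurable fun t => ENNReal.ofReal (t ^ (-α / 2) * F t) := by fun_prop
  refine lqNorm_le_of_ae_le hq₁ htop hq hG ?_ ?_
  · filter_upwards [ae_haarIoc_mem] with t ht
    refine (weighted_local_average hC hF ht (h t ht)).trans ?_
    gcongr
    · exact le_max_right _ _
    · exact window_average_le_lqNorm hq₁ htop hG ht.1
  · refine le_mul_of_one_le_left' ?_
    rw [← ENNReal.ofReal_one]
    exact ENNReal.ofReal_le_ofReal (le_max_left _ _)
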